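/- arXiv:1810.04541 — 2 statements merged into one kernel-verified Lean document; each statement's English description precedes it below -/
import Mathlib

section
/- (Covering half of Proposition 3.1.) Let (X,d_X) and (Z,d_Z) be metric spaces carrying continuous flows g^X and g^Z, and let π : X → Z be a continuous map intertwining the flows, i.e. π(g^X_t(x)) = g^Z_t(π(x)) for all t ∈ ℝ and x ∈ X. Assume there is ε₀ > 0 such that for every x ∈ X the restriction of π to the open ball B(x,ε₀) is a bijection onto the open ball B(π(x),ε₀) satisfying d_Z(π(a),π(b)) = d_X(a,b) for all a,b ∈ B(x,ε₀). Then for every 0 < ε ≤ ε₀ and every p ∈ X, π(W^{wu}_ε(p)) = W^{wu}_ε(π(p)), where the local weakly unstable sets are taken with respect to g^X and g^Z respectively. -/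
/-!
Statement 5 (covering half of Proposition 3.1): if `π : X → Z` intertwines two
continuous flows and restricts to an isometric bijection from each ball `B(x,ε₀)` onto
the ball `B(π(x),ε₀)`, then for every `0 < ε ≤ ε₀` and every `p ∈ X`,
`π(W^{wu}_ε(p)) = W^{wu}_ε(π(p))`.
-/

open Set Metric

/-- The local weakly unstable set of size `ε` at `p` for a flow `g`, with respect to a
distance function `d`. -/
def Wwu {α : Type*} (d : α → α → ℝ) (g : ℝ → α → α) (ε : ℝ) (p : α) : Set α :=
  {q | ∀ t : ℝ, 0 ≤ t → d (g (-t) p) (g (-t) q) < ε}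

/-!
Given `z ∈ W^{wu}_ε(π p)`, lift `z` to a point `q` of the ball `B(p,ε₀)`. The set of times `t ≥ 0`
at which the backward orbits of `p` and `q` are `ε₀`-close is open; since the projected orbits are
always `ε₀`-close, it is also the set of times at which `π` preserves the distance between them,
hence closed. It contains `0`, so by connectedness it is all of `[0,∞)`, and `π` preserves the
distance between the two orbits throughout.
-/

open scoped NNReal

/-- `π` is a local isometry at the uniform scale `r`: it preserves all distances smaller than `r`.
This is the metric half of `π` being an isometric bijection between `r`-balls; surjectivity onto
balls is kept separate. -/
def IsometryAtScale {X Z : Type*} [PseudoMetricSpace X] [PseudoMetricSpace Z]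
    (π : X → Z) (r : ℝ) : Prop :=
  ∀ ⦃x y : X⦄, dist x y < r → dist (π x) (π y) = dist x y

theorem mem_ball_of_mem_wwu {X : Type*} [PseudoMetricSpace X] {g : ℝ → X → X}
    (hg_zero : ∀ x, g 0 x = x) {ε : ℝ} {p q : X} (hq : q ∈ Wwu dist g ε p) : q ∈ ball p ε := by
  have hq_zero := hq 0 le_rfl
  rwa [neg_zero, hg_zero, hg_zero, ← mem_ball'] at hq_zero

namespace IsometryAtScale

variable {X Z : Type*} [PseudoMetricSpace X] [PseudoMetricSpace Z] {π : X → Z} {r : ℝ}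

theorem of_forall_ball
    (hπ : ∀ x, ∀ a ∈ ball x r, ∀ b ∈ ball x r, dist (π a) (π b) = dist a b) :
    IsometryAtScale π r :=
  fun x y hxy => hπ x x (mem_ball_self (dist_nonneg.trans_lt hxy)) y (mem_ball'.2 hxy)

theorem continuous (hπ : IsometryAtScale π r) (hr : 0 < r) : Continuous π := by
  refine Metric.continuous_iff.2 fun x δ hδ => ⟨min δ r, lt_min hδ hr, fun y hy => ?_⟩
  rw [hπ (hy.trans_le (min_le_right δ r))]
  exact hy.trans_le (min_le_left δ r)

theorem dist_lt_of_dist_comp_lt {T : Type*} [TopologicalSpace T] [PreconnectedSpace T]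
    {u v : T → X} (hπ : IsometryAtScale π r) (hu : Continuous u) (hv : Continuous v)
    (hcomp : ∀ t, dist (π (u t)) (π (v t)) < r) {t₀ : T} (ht₀ : dist (u t₀) (v t₀) < r) (t : T) :
    dist (u t) (v t) < r := by
  have hπ_cont : Continuous π := hπ.continuous (dist_nonneg.trans_lt ht₀)
  have close_iff_dist_eq (s : T) :
      dist (u s) (v s) < r ↔ dist (π (u s)) (π (v s)) = dist (u s) (v s) :=
    ⟨fun hs => hπ hs, fun hs => hs ▸ hcomp s⟩
  have isOpen_close : IsOpen {s | dist (u s) (v s) < r} :=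
    isOpen_lt (hu.dist hv) continuous_const
  have isClosed_close : IsClosed {s | dist (u s) (v s) < r} := by
    simp only [close_iff_dist_eq]
    exact isClosed_eq ((hπ_cont.comp hu).dist (hπ_cont.comp hv)) (hu.dist hv)
  exact eq_univ_iff_forall.1 (IsClopen.eq_univ ⟨isClosed_close, isOpen_close⟩ ⟨t₀, ht₀⟩) t

variable {gX : ℝ → X → X} {gZ : ℝ → Z → Z} {ε : ℝ} {p q : X}

theorem map_mem_wwu (hπ : IsometryAtScale π r) (hflow : ∀ t, Function.Semiconj π (gX t) (gZ t))
    (hε : ε ≤ r) (hq : q ∈ Wwu dist gX ε p) : π q ∈ Wwu dist gZ ε (π p) := by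
  intro t ht
  have hclose := hq t ht
  rwa [← hflow, ← hflow, hπ (hclose.trans_le hε)]

theorem mem_wwu_of_map_mem_wwu (hπ : IsometryAtScale π r)
    (hgX_cont : ∀ x, Continuous fun t => gX t x) (hgX_zero : ∀ x, gX 0 x = x)
    (hflow : ∀ t, Function.Semiconj π (gX t) (gZ t)) (hε : ε ≤ r) (hpq : dist p q < r)
    (hq : π q ∈ Wwu dist gZ ε (π p)) : q ∈ Wwu dist gX ε p := by
  have map_close (t : ℝ≥0) : dist (π (gX (-t) p)) (π (gX (-t) q)) < ε := by
    rw [hflow, hflow]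
    exact hq t t.coe_nonneg
  have backward_cont (x : X) : Continuous fun t : ℝ≥0 => gX (-t) x :=
    (hgX_cont x).comp NNReal.continuous_coe.neg
  have close (t : ℝ≥0) : dist (gX (-t) p) (gX (-t) q) < r :=
    hπ.dist_lt_of_dist_comp_lt (backward_cont p) (backward_cont q)
      (fun s => (map_close s).trans_le hε) (t₀ := 0) (by simpa [hgX_zero] using hpq) t
  intro t ht
  lift t to ℝ≥0 using ht
  exact hπ (close t) ▸ map_close t

end IsometryAtScale

theorem wwu_covering_general {X Z : Type*} [PseudoMetricSpace X] [PseudoMetricSpace Z]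
    {gX : ℝ → X → X} {gZ : ℝ → Z → Z} {π : X → Z} {ε₀ ε : ℝ}
    (hgX_cont : ∀ x, Continuous fun t => gX t x)
    (hgX_zero : ∀ x, gX 0 x = x) (hgZ_zero : ∀ z, gZ 0 z = z)
    (hflow : ∀ t, Function.Semiconj π (gX t) (gZ t)) (hπ : IsometryAtScale π ε₀)
    (hsurj : ∀ x, SurjOn π (ball x ε₀) (ball (π x) ε₀)) (hε : ε ≤ ε₀) (p : X) :
    π '' Wwu dist gX ε p = Wwu dist gZ ε (π p) := by
  refine Subset.antisymm (image_subset_iff.2 fun q hq => hπ.map_mem_wwu hflow hε hq) fun z hz => ?_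
  have hz_ball : z ∈ ball (π p) ε₀ := ball_subset_ball hε (mem_ball_of_mem_wwu hgZ_zero hz)
  obtain ⟨q, hq_ball, rfl⟩ := hsurj p hz_ball
  exact ⟨q, hπ.mem_wwu_of_map_mem_wwu hgX_cont hgX_zero hflow hε (mem_ball'.1 hq_ball) hz, rfl⟩

theorem wwu_covering
    {X Z : Type*} [MetricSpace X] [MetricSpace Z]
    (gX : ℝ → X → X) (gZ : ℝ → Z → Z)
    (hgXcont : Continuous fun p : ℝ × X => gX p.1 p.2)
    (hgZcont : Continuous fun p : ℝ × Z => gZ p.1 p.2)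
    (hgX0 : ∀ x, gX 0 x = x)
    (hgXadd : ∀ t t' x, gX (t + t') x = gX t (gX t' x))
    (hgZ0 : ∀ z, gZ 0 z = z)
    (hgZadd : ∀ t t' z, gZ (t + t') z = gZ t (gZ t' z))
    (π : X → Z) (hπcont : Continuous π)
    (hπflow : ∀ (t : ℝ) (x : X), π (gX t x) = gZ t (π x))
    (ε₀ : ℝ) (hε₀ : 0 < ε₀)
    (hbij : ∀ x : X, Set.BijOn π (ball x ε₀) (ball (π x) ε₀))
    (hisom : ∀ x : X, ∀ a ∈ ball x ε₀, ∀ b ∈ ball x ε₀, dist (π a) (π b) = dist a b)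
    (ε : ℝ) (hε : 0 < ε) (hεε₀ : ε ≤ ε₀) (p : X) :
    π '' Wwu dist gX ε p = Wwu dist gZ ε (π p) :=
  wwu_covering_general (fun x => hgXcont.comp (.prodMk_left x)) hgX0 hgZ0 hπflow
    (.of_forall_ball hisom) (fun x => (hbij x).surjOn) hεε₀ p
end

section
/- (Non-minimality of the horocycle flow on Sol-manifolds.) Let Sol³ denote ℝ³ with the group law (x,y,z)·(x',y',z') = (x + e^z x', y + e^{−z} y', z + z'), and let Γ be a discrete cocompact subgroup of Sol³ such that Γ ∩ (ℝ²×{0}) is a lattice in the subgroup ℝ²×{0} ≅ ℝ². Consider on the compact quotient M = Γ\Sol³ the flow induced by the right translations h_s(x,y,z) = (x,y,z)·(s,0,0) = (x + e^z s, y, z). Then for every point p = Γ(x,y,z) of M, the closure of the h-orbit of p equals the image in M of the plane {(x',y',z) : x',y' ∈ ℝ}, which is a compact proper subset of M. In particular the flow h is not minimal. -/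
/-!
Statement 11 (non-minimality of the horocycle flow on Sol-manifolds): for a discrete
cocompact subgroup `Γ ≤ Sol³` whose intersection with the plane subgroup `ℝ²×{0} ≅ ℝ²`
is a lattice in `ℝ²`, the closure of every orbit of the flow
`h_s(x,y,z) = (x + e^z s, y, z)` on `M = Γ\Sol³` is the image of the corresponding
plane `{(x',y',z)}`, a compact proper subset of `M`; in particular `h` is not minimal.
-/

open QuotientGroup

/-- The solvable Lie group `Sol³`: `ℝ³` with the multiplication
`(x,y,z)·(x',y',z') = (x + e^z x', y + e^{−z} y', z + z')`. -/
def Sol3 : Type := ℝ × ℝ × ℝ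

namespace Sol3

/-- The point `(x,y,z)` of `Sol³`. -/
def mk (x y z : ℝ) : Sol3 := (x, y, z)

noncomputable instance : Mul Sol3 :=
  ⟨fun a b => (a.1 + Real.exp a.2.2 * b.1, a.2.1 + Real.exp (-a.2.2) * b.2.1, a.2.2 + b.2.2)⟩

instance : One Sol3 := ⟨((0 : ℝ), (0 : ℝ), (0 : ℝ))⟩

noncomputable instance : Inv Sol3 :=
  ⟨fun a => (-(Real.exp (-a.2.2) * a.1), -(Real.exp a.2.2 * a.2.1), -a.2.2)⟩

theorem mul_def (a b : Sol3) :
    a * b = (a.1 + Real.exp a.2.2 * b.1, a.2.1 + Real.exp (-a.2.2) * b.2.1, a.2.2 + b.2.2) := rfl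

theorem one_def : (1 : Sol3) = mk 0 0 0 := rfl

theorem inv_def (a : Sol3) :
    a⁻¹ = (-(Real.exp (-a.2.2) * a.1), -(Real.exp a.2.2 * a.2.1), -a.2.2) := rfl

theorem mk_mul_mk (x y z x' y' z' : ℝ) :
    mk x y z * mk x' y' z'
      = mk (x + Real.exp z * x') (y + Real.exp (-z) * y') (z + z') := rfl

theorem mk_inv (x y z : ℝ) :
    (mk x y z)⁻¹ = mk (-(Real.exp (-z) * x)) (-(Real.exp z * y)) (-z) := rfl

noncomputable instance : Group Sol3 where
  mul_assoc a b c := by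
    simp only [mul_def]
    refine Prod.ext ?_ (Prod.ext ?_ ?_)
    · show a.1 + Real.exp a.2.2 * b.1 + Real.exp (a.2.2 + b.2.2) * c.1
          = a.1 + Real.exp a.2.2 * (b.1 + Real.exp b.2.2 * c.1)
      rw [Real.exp_add]; ring
    · show a.2.1 + Real.exp (-a.2.2) * b.2.1 + Real.exp (-(a.2.2 + b.2.2)) * c.2.1
          = a.2.1 + Real.exp (-a.2.2) * (b.2.1 + Real.exp (-b.2.2) * c.2.1)
      rw [neg_add, Real.exp_add]; ring
    · exact add_assoc _ _ _
  one_mul a := by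
    simp only [mul_def, one_def]
    refine Prod.ext ?_ (Prod.ext ?_ ?_) <;> simp [mk]
  mul_one a := by
    simp only [mul_def, one_def]
    refine Prod.ext ?_ (Prod.ext ?_ ?_) <;> simp [mk]
  inv_mul_cancel a := by
    simp only [mul_def, inv_def, one_def]
    refine Prod.ext ?_ (Prod.ext ?_ ?_)
    · show -(Real.exp (-a.2.2) * a.1) + Real.exp (-a.2.2) * a.1 = (mk 0 0 0).1
      simp [mk]
    · show -(Real.exp a.2.2 * a.2.1) + Real.exp (- -a.2.2) * a.2.1 = (mk 0 0 0).2.1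
      rw [neg_neg]; simp [mk]
    · show -a.2.2 + a.2.2 = (mk 0 0 0).2.2
      simp [mk]

noncomputable instance : TopologicalSpace Sol3 :=
  inferInstanceAs (TopologicalSpace (ℝ × ℝ × ℝ))

end Sol3

/-- Right translation by `g` on the space `Γ\H` of right cosets `Γx`. -/
def rightMulQuot {H : Type*} [Group H] (Γ : Subgroup H) (g : H) :
    Quotient (QuotientGroup.rightRel Γ) → Quotient (QuotientGroup.rightRel Γ) :=
  Quotient.map (· * g) (fun a b hab => by
    have h : b * a⁻¹ ∈ Γ := QuotientGroup.rightRel_apply.mp hab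
    exact QuotientGroup.rightRel_apply.mpr (by simpa [mul_assoc] using h))

/-- The intersection of `Γ` with the plane subgroup `ℝ²×{0} ≅ ℝ²` of `Sol³`, viewed as
an additive subgroup of `ℝ²`. -/
def latticePart (Γ : Subgroup Sol3) : AddSubgroup (ℝ × ℝ) where
  carrier := {v | Sol3.mk v.1 v.2 0 ∈ Γ}
  add_mem' := by
    intro a b ha hb
    have h := Γ.mul_mem ha hb
    rw [Sol3.mk_mul_mk] at h
    simpa using h
  zero_mem' := by
    have h := Γ.one_mem
    rw [Sol3.one_def] at h
    simpa using h
  neg_mem' := by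
    intro a ha
    have h := Γ.inv_mem ha
    rw [Sol3.mk_inv] at h
    simpa using h

/-!
The heights `w.2.2` of the elements of `Γ` form a subgroup `T` of `ℝ`, and conjugation by an element
of height `t` acts on the lattice `Λ = Γ ∩ ℝ²` by `diag(eᵗ, e⁻ᵗ)`. Fixing a nonzero `v ∈ Λ`, the
continuous injection `t ↦ diag(eᵗ, e⁻ᵗ) v` maps `T` into the discrete set `Λ`, so `T` is discrete;
hence the image of each plane of constant height is closed and proper. Cocompactness of `Γ` makes
`T` nonzero, so the projection of `Λ` to the `y`-axis is invariant under multiplication by some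
`c ∈ (0, 1)`. Such a subgroup of `ℝ` is not cyclic and is therefore dense. As a horocycle is a full
line in the `x`-direction, translating it by `Λ` reaches a dense set of values of `y`.
-/

open Set

theorem isCompact_range_of_compactSpace_quotient {X Y : Type*} [TopologicalSpace X]
    [TopologicalSpace Y] {r : Setoid X} [CompactSpace (Quotient r)] {f : X → Y}
    (hf : Continuous f) (hr : ∀ a b, r a b → f a = f b) : IsCompact (range f) := by
  have h_lift := isCompact_range (hf.quotient_lift hr)
  rwa [range_quotient_lift hr] at h_lift

theorem exists_rel_ne_of_compactSpace_quotient {X Y : Type*} [TopologicalSpace X]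
    [TopologicalSpace Y] [NoncompactSpace Y] (r : Setoid X) [CompactSpace (Quotient r)]
    {f : X → Y} (hf : Continuous f) (hsurj : f.Surjective) : ∃ a b, r a b ∧ f a ≠ f b := by
  by_contra! hr
  have h_range := isCompact_range_of_compactSpace_quotient hf hr
  rw [hsurj.range_eq] at h_range
  exact noncompact_univ Y h_range

theorem map_ne_bot_of_compactSpace_quotient {E F : Type*} [AddGroup E] [TopologicalSpace E]
    [AddGroup F] [TopologicalSpace F] [NoncompactSpace F] (A : AddSubgroup E)
    [CompactSpace (E ⧸ A)] {f : E →+ F} (hf : Continuous f) (hsurj : Function.Surjective f) :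
    A.map f ≠ ⊥ := by
  obtain ⟨a, b, hab, hne⟩ :=
    exists_rel_ne_of_compactSpace_quotient (QuotientAddGroup.leftRel A) hf hsurj
  intro h_bot
  have h_mem : f (-a + b) ∈ A.map f :=
    AddSubgroup.mem_map_of_mem f (QuotientAddGroup.leftRel_apply.mp hab)
  rw [h_bot, AddSubgroup.mem_bot, map_add, map_neg, neg_add_eq_zero] at h_mem
  exact hne h_mem

theorem dense_addSubgroup_of_forall_mul_mem {K : Type*} [Field K] [LinearOrder K]
    [IsStrictOrderedRing K] [Archimedean K] [TopologicalSpace K] [OrderTopology K]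
    {A : AddSubgroup K} (hA : A ≠ ⊥) {c : K} (hc₀ : c ≠ 0) (hc₁ : |c| < 1)
    (hmul : ∀ a ∈ A, c * a ∈ A) : Dense (A : Set K) := by
  refine A.dense_or_cyclic.resolve_right ?_
  rintro ⟨g, rfl⟩
  have hg : g ≠ 0 := by
    rintro rfl
    exact hA AddSubgroup.closure_singleton_zero
  obtain ⟨n, hn⟩ := AddSubgroup.mem_closure_singleton.mp
    (hmul g (AddSubgroup.mem_closure_singleton_self g))
  have hcn : (n : K) = c := mul_right_cancel₀ hg (by rw [← hn, zsmul_eq_mul])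
  rw [← hcn, ← Int.cast_abs, ← Int.cast_one, Int.cast_lt, Int.abs_lt_one_iff] at hc₁
  exact hc₀ (by rw [← hcn, hc₁, Int.cast_zero])

namespace Sol3

theorem mk_zero_mul_mk (a b x y z : ℝ) : mk a b 0 * mk x y z = mk (a + x) (b + y) z := by
  simp [mk_mul_mk]

theorem mul_mk_zero_mul_inv (w : Sol3) (a b : ℝ) :
    w * mk a b 0 * w⁻¹ = mk (Real.exp w.2.2 * a) (Real.exp (-w.2.2) * b) 0 := by
  rw [mul_inv_eq_iff_eq_mul]
  obtain ⟨x, y, z⟩ := w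
  change mk x y z * mk a b 0 = mk (Real.exp z * a) (Real.exp (-z) * b) 0 * mk x y z
  simp [mk_mul_mk, add_comm]

theorem continuous_height : Continuous fun w : Sol3 => w.2.2 :=
  continuous_snd.comp (continuous_snd (X := ℝ) (Y := ℝ × ℝ))

theorem continuous_mk {X : Type*} [TopologicalSpace X] {f g h : X → ℝ} (hf : Continuous f)
    (hg : Continuous g) (hh : Continuous h) : Continuous fun p => mk (f p) (g p) (h p) :=
  hf.prodMk (hg.prodMk hh)

end Sol3

/-- The image of `Γ` under the homomorphism `(x, y, z) ↦ z`, as an additive subgroup of `ℝ`. -/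
def heightSubgroup (Γ : Subgroup Sol3) : AddSubgroup ℝ where
  carrier := (fun w : Sol3 => w.2.2) '' Γ
  add_mem' := by
    rintro _ _ ⟨v, hv, rfl⟩ ⟨w, hw, rfl⟩
    exact ⟨v * w, Γ.mul_mem hv hw, rfl⟩
  zero_mem' := ⟨1, Γ.one_mem, rfl⟩
  neg_mem' := by
    rintro _ ⟨w, hw, rfl⟩
    exact ⟨w⁻¹, Γ.inv_mem hw, rfl⟩

/-- The image in `Γ\Sol³` of the plane of height `z`; these are the orbit closures of the
horocycle flow. -/
def leaf (Γ : Subgroup Sol3) (z : ℝ) : Set (Quotient (rightRel Γ)) :=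
  Quotient.mk (rightRel Γ) '' {w : Sol3 | w.2.2 = z}

/-- The orbit of the point `q` of `Γ\Sol³` under the horocycle flow, the right translations by
`(s, 0, 0)`. -/
def horocycleOrbit (Γ : Subgroup Sol3) (q : Quotient (rightRel Γ)) : Set (Quotient (rightRel Γ)) :=
  range fun s : ℝ => rightMulQuot Γ (Sol3.mk s 0 0) q

section

variable {Γ : Subgroup Sol3}

theorem diag_exp_mem_latticePart {t : ℝ} (ht : t ∈ heightSubgroup Γ) {v : ℝ × ℝ}
    (hv : v ∈ latticePart Γ) : (Real.exp t * v.1, Real.exp (-t) * v.2) ∈ latticePart Γ := by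
  obtain ⟨w, hw, rfl⟩ := ht
  have h_conj := Γ.mul_mem (Γ.mul_mem hw hv) (Γ.inv_mem hw)
  rwa [Sol3.mul_mk_zero_mul_inv] at h_conj

theorem injective_diag_exp {v : ℝ × ℝ} (hv : v ≠ 0) :
    Function.Injective fun t : ℝ => (Real.exp t * v.1, Real.exp (-t) * v.2) := by
  intro s t hst
  obtain ⟨h_fst, h_snd⟩ := Prod.mk.inj hst
  by_cases h₁ : v.1 = 0
  · have h₂ : v.2 ≠ 0 := fun h₂ => hv (Prod.ext h₁ h₂)
    exact neg_injective (Real.exp_injective (mul_right_cancel₀ h₂ h_snd))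
  · exact Real.exp_injective (mul_right_cancel₀ h₁ h_fst)

theorem discreteTopology_heightSubgroup [DiscreteTopology (latticePart Γ)]
    (hΛ : latticePart Γ ≠ ⊥) : DiscreteTopology (heightSubgroup Γ) := by
  obtain ⟨v, hv⟩ := AddSubgroup.ne_bot_iff_exists_ne_zero.mp hΛ
  let diagOrbit : heightSubgroup Γ → latticePart Γ := fun t =>
    ⟨(Real.exp t * v.1.1, Real.exp (-t) * v.1.2), diag_exp_mem_latticePart t.2 v.2⟩
  have h_cont : Continuous diagOrbit := by fun_prop
  refine DiscreteTopology.of_continuous_injective h_cont fun s t hst => ?_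
  exact Subtype.ext (injective_diag_exp (by simpa using hv) (congrArg Subtype.val hst))

theorem dense_map_snd_latticePart (hT : heightSubgroup Γ ≠ ⊥)
    (hΛ : (latticePart Γ).map (AddMonoidHom.snd ℝ ℝ) ≠ ⊥) :
    Dense ((latticePart Γ).map (AddMonoidHom.snd ℝ ℝ) : Set ℝ) := by
  obtain ⟨⟨t, ht⟩, ht₀⟩ := AddSubgroup.ne_bot_iff_exists_ne_zero.mp hT
  have h_abs : 0 < |t| := abs_pos.mpr (by simpa using ht₀)
  refine dense_addSubgroup_of_forall_mul_mem hΛ (Real.exp_ne_zero (-|t|)) ?_ ?_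
  · rwa [Real.abs_exp, Real.exp_lt_one_iff, neg_lt_zero]
  · rintro _ ⟨v, hv, rfl⟩
    exact ⟨_, diag_exp_mem_latticePart (abs_mem_iff.mpr ht) hv, rfl⟩

theorem quotient_mk_add_of_mem_latticePart {v : ℝ × ℝ} (hv : v ∈ latticePart Γ) (x y z : ℝ) :
    Quotient.mk (rightRel Γ) (Sol3.mk (v.1 + x) (v.2 + y) z) =
      Quotient.mk (rightRel Γ) (Sol3.mk x y z) := by
  refine (Quotient.sound (rightRel_apply.mpr ?_)).symm
  rw [← Sol3.mk_zero_mul_mk, mul_inv_cancel_right]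
  exact hv

theorem preimage_mk_leaf (z : ℝ) :
    Quotient.mk (rightRel Γ) ⁻¹' leaf Γ z = {w | w.2.2 - z ∈ heightSubgroup Γ} := by
  ext w
  constructor
  · rintro ⟨v, rfl, hvw⟩
    exact ⟨w * v⁻¹, rightRel_apply.mp (Quotient.exact hvw), (sub_eq_add_neg _ _).symm⟩
  · rintro ⟨g, hg, hgz⟩
    have h_height : (g⁻¹ * w).2.2 = z := by
      change -g.2.2 + w.2.2 = z
      linarith
    exact ⟨g⁻¹ * w, h_height, Quotient.sound (rightRel_apply.mpr (by simpa using hg))⟩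

theorem leaf_eq_range (z : ℝ) :
    leaf Γ z = range fun v : ℝ × ℝ => Quotient.mk (rightRel Γ) (Sol3.mk v.1 v.2 z) := by
  ext q
  constructor
  · rintro ⟨w, rfl, rfl⟩
    exact ⟨(w.1, w.2.1), rfl⟩
  · rintro ⟨v, rfl⟩
    exact ⟨_, rfl, rfl⟩

theorem horocycleOrbit_mk (x y z : ℝ) :
    horocycleOrbit Γ (Quotient.mk (rightRel Γ) (Sol3.mk x y z)) =
      range fun x' : ℝ => Quotient.mk (rightRel Γ) (Sol3.mk x' y z) := by
  have h_surj : Function.Surjective fun s : ℝ => x + Real.exp z * s := fun x' =>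
    ⟨(x' - x) / Real.exp z, by simp [mul_div_cancel₀]⟩
  rw [← h_surj.range_comp]
  refine congrArg range (funext fun s => congrArg (Quotient.mk (rightRel Γ)) ?_)
  simp [Sol3.mk_mul_mk]

theorem isClosed_leaf [DiscreteTopology (latticePart Γ)] (hΛ : latticePart Γ ≠ ⊥) (z : ℝ) :
    IsClosed (leaf Γ z) := by
  have := discreteTopology_heightSubgroup hΛ
  have h_closed : IsClosed (heightSubgroup Γ : Set ℝ) := AddSubgroup.isClosed_of_discrete
  rw [← isQuotientMap_quotient_mk'.isClosed_preimage]
  exact preimage_mk_leaf z ▸ h_closed.preimage (Sol3.continuous_height.sub continuous_const)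

theorem leaf_ne_univ [DiscreteTopology (latticePart Γ)] (hΛ : latticePart Γ ≠ ⊥) (z : ℝ) :
    leaf Γ z ≠ univ := by
  intro h_univ
  have := discreteTopology_heightSubgroup hΛ
  have h_top : (heightSubgroup Γ : Set ℝ) = univ := by
    refine eq_univ_of_forall fun t => ?_
    have h_mem : Sol3.mk 0 0 (t + z) ∈ Quotient.mk (rightRel Γ) ⁻¹' leaf Γ z := by simp [h_univ]
    rw [preimage_mk_leaf] at h_mem
    exact add_sub_cancel_right t z ▸ h_mem
  have h_countable : (heightSubgroup Γ : Set ℝ).Countable := countable_of_Lindelof_of_discrete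
  exact not_countable_univ (h_top ▸ h_countable)

end

section

variable (Γ : Subgroup Sol3)

theorem heightSubgroup_ne_bot [CompactSpace (Quotient (rightRel Γ))] : heightSubgroup Γ ≠ ⊥ := by
  have h_surj : Function.Surjective fun w : Sol3 => w.2.2 := fun t => ⟨Sol3.mk 0 0 t, rfl⟩
  obtain ⟨a, b, hab, hne⟩ :=
    exists_rel_ne_of_compactSpace_quotient (rightRel Γ) Sol3.continuous_height h_surj
  intro h_bot
  have h_mem : b.2.2 + -a.2.2 ∈ heightSubgroup Γ := ⟨b * a⁻¹, rightRel_apply.mp hab, rfl⟩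
  rw [h_bot, AddSubgroup.mem_bot, add_neg_eq_zero] at h_mem
  exact hne h_mem.symm

variable [CompactSpace ((ℝ × ℝ) ⧸ latticePart Γ)]

theorem map_snd_latticePart_ne_bot : (latticePart Γ).map (AddMonoidHom.snd ℝ ℝ) ≠ ⊥ :=
  map_ne_bot_of_compactSpace_quotient _ continuous_snd Prod.snd_surjective

theorem latticePart_ne_bot : latticePart Γ ≠ ⊥ := fun h_bot =>
  map_snd_latticePart_ne_bot Γ (by rw [h_bot, AddSubgroup.map_bot])

theorem isCompact_leaf (z : ℝ) : IsCompact (leaf Γ z) := by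
  have h_cont : Continuous fun v : ℝ × ℝ => Quotient.mk (rightRel Γ) (Sol3.mk v.1 v.2 z) :=
    continuous_quotient_mk'.comp
      (Sol3.continuous_mk continuous_fst continuous_snd continuous_const)
  rw [leaf_eq_range]
  refine isCompact_range_of_compactSpace_quotient
    (r := QuotientAddGroup.leftRel (latticePart Γ)) h_cont fun v w hvw => ?_
  have h_add := quotient_mk_add_of_mem_latticePart (QuotientAddGroup.leftRel_apply.mp hvw) v.1 v.2 z
  simpa using h_add.symm

theorem leaf_subset_closure_horocycleOrbit [CompactSpace (Quotient (rightRel Γ))] (x y z : ℝ) :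
    leaf Γ z ⊆ closure (horocycleOrbit Γ (Quotient.mk (rightRel Γ) (Sol3.mk x y z))) := by
  rw [leaf_eq_range, horocycleOrbit_mk]
  rintro _ ⟨⟨x', y'⟩, rfl⟩
  have h_cont : Continuous fun u : ℝ => Quotient.mk (rightRel Γ) (Sol3.mk x' (u + y) z) :=
    continuous_quotient_mk'.comp
      (Sol3.continuous_mk continuous_const (continuous_add_const y) continuous_const)
  have h_dense := dense_map_snd_latticePart (heightSubgroup_ne_bot Γ) (map_snd_latticePart_ne_bot Γ)
  have h_closure := map_mem_closure h_cont (h_dense (y' - y))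
    (t := range fun x' : ℝ => Quotient.mk (rightRel Γ) (Sol3.mk x' y z)) ?_
  · simpa using h_closure
  · rintro _ ⟨v, hv, rfl⟩
    refine ⟨x' - v.1, ?_⟩
    simpa using (quotient_mk_add_of_mem_latticePart hv (x' - v.1) y z).symm

theorem closure_horocycleOrbit [CompactSpace (Quotient (rightRel Γ))]
    [DiscreteTopology (latticePart Γ)] (x y z : ℝ) :
    closure (horocycleOrbit Γ (Quotient.mk (rightRel Γ) (Sol3.mk x y z))) = leaf Γ z := by
  refine (closure_minimal ?_ (isClosed_leaf (latticePart_ne_bot Γ) z)).antisymm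
    (leaf_subset_closure_horocycleOrbit Γ x y z)
  rw [horocycleOrbit_mk, leaf_eq_range]
  rintro _ ⟨x', rfl⟩
  exact ⟨(x', y), rfl⟩

end

theorem horocycle_flow_not_minimal_on_Sol3_manifold
    (Γ : Subgroup Sol3) [DiscreteTopology Γ]
    [CompactSpace (Quotient (QuotientGroup.rightRel Γ))]
    [DiscreteTopology (latticePart Γ)]
    [CompactSpace ((ℝ × ℝ) ⧸ latticePart Γ)]
    (x y z : ℝ) :
    closure (Set.range fun s : ℝ =>
        rightMulQuot Γ (Sol3.mk s 0 0)
          (Quotient.mk (QuotientGroup.rightRel Γ) (Sol3.mk x y z)))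
      = Quotient.mk (QuotientGroup.rightRel Γ) '' {w : Sol3 | w.2.2 = z} ∧
    IsCompact (Quotient.mk (QuotientGroup.rightRel Γ) '' {w : Sol3 | w.2.2 = z}) ∧
    Quotient.mk (QuotientGroup.rightRel Γ) '' {w : Sol3 | w.2.2 = z} ≠ Set.univ ∧
    ¬ ∀ q : Quotient (QuotientGroup.rightRel Γ),
        Dense (Set.range fun s : ℝ => rightMulQuot Γ (Sol3.mk s 0 0) q) := by
  have h_closure := closure_horocycleOrbit Γ x y z
  have h_proper := leaf_ne_univ (latticePart_ne_bot Γ) z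
  refine ⟨h_closure, isCompact_leaf Γ z, h_proper, fun h_minimal => h_proper ?_⟩
  rw [← h_closure]
  exact (h_minimal _).closure_eq
end
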